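/- arXiv:2112.04838 — 4 statements merged into one kernel-verified Lean document; each statement's English description precedes it below -/
import Mathlib

section
/- Let N = p·q where p and q are distinct primes, each greater than 32. Let A be a 32×33 matrix over ZMod N (rows indexed by Fin 32, columns by Fin 33), let α, β ∈ ZMod N, let t' : Fin 32 → ZMod N, let r : Fin 32 → ZMod N, and let π be a permutation of Fin 32. Define the 33×33 matrix M over ZMod N by M[i][j] = C(i,j)·α^j·β^{i−j} for j ≤ i and M[i][j] = 0 for j > i, and for c ∈ ZMod N define s(c) : Fin 33 → ZMod N by s(c)[j] = (α·c + β)^j. Then the following are equivalent: (1) for every c ∈ ZMod N and every i ∈ Fin 32, (Σ_{j ∈ Fin 33} A[i][j]·s(c)[j]) − c^{32}·t'(i) = r(π(i))·c^{π(i)}; (2) for every i ∈ Fin 32, the i-th row of the matrix product A·M equals r(π(i)) at column π(i) (viewed as an element of Fin 33), equals t'(i) at column 32, and equals 0 at every other column. -/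
/-- The lower-triangular binomial matrix `M` with `M[i][j] = C(i,j)·α^j·β^(i−j)` for `j ≤ i`. -/
def binomMat {R : Type*} [CommRing R] (α β : R) : Matrix (Fin 33) (Fin 33) R :=
  Matrix.of fun i j =>
    if (j : ℕ) ≤ (i : ℕ) then (Nat.choose i j : R) * α ^ (j : ℕ) * β ^ ((i : ℕ) - (j : ℕ)) else 0

/-- The powers of `α * c + β` are the image of the powers of `c` under `binomMat α β`. -/
lemma sum_binomMat_mul_pow {R : Type*} [CommRing R] (α β c : R) (i : Fin 33) :
    ∑ j : Fin 33, binomMat α β i j * c ^ (j : ℕ) = (α * c + β) ^ (i : ℕ) := by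
  simp only [binomMat, Matrix.of_apply]
  rw [Fin.sum_univ_eq_sum_range (fun j => (if j ≤ (i : ℕ) then
    (Nat.choose i j : R) * α ^ j * β ^ ((i : ℕ) - j) else 0) * c ^ j) 33, add_pow]
  symm
  apply Finset.sum_subset_zero_on_sdiff
  · intro k hk
    simp only [Finset.mem_range] at *
    omega
  · intro k hk
    have : ¬ k ≤ (i : ℕ) := by
      simp only [Finset.mem_sdiff, Finset.mem_range] at hk
      omega
    simp [this]
  · intro k hk
    have : k ≤ (i : ℕ) := by
      simp only [Finset.mem_range] at hk
      omega
    rw [if_pos this]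
    ring

lemma sum_mul_affine_pow_eq_sum_mul_binomMat {R ι : Type*} [CommRing R]
    (A : Matrix ι (Fin 33) R) (α β c : R) (i : ι) :
    ∑ j : Fin 33, A i j * (α * c + β) ^ (j : ℕ)
      = ∑ k : Fin 33, (A * binomMat α β) i k * c ^ (k : ℕ) := by
  simp only [Matrix.mul_apply, Finset.sum_mul, ← sum_binomMat_mul_pow α β c, Finset.mul_sum,
    mul_assoc]
  exact Finset.sum_comm

/-- A polynomial with `n` coefficients that vanishes at `n` points whose pairwise
differences are units is zero. -/
lemma eq_zero_of_sum_mul_pow_eq_zero {R : Type*} [CommRing R] {n : ℕ} (v d : Fin n → R)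
    (hv : ∀ i j, i < j → IsUnit (v j - v i))
    (h : ∀ i, ∑ j : Fin n, d j * v i ^ (j : ℕ) = 0) : d = 0 := by
  have hdet : IsUnit (Matrix.vandermonde v).det := by
    rw [Matrix.det_vandermonde]
    exact IsUnit.prod_univ_iff.2 fun i => IsUnit.prod_iff.2 fun j hj => hv i j (Finset.mem_Ioi.1 hj)
  apply Matrix.mulVec_injective_of_isUnit ((Matrix.isUnit_iff_isUnit_det _).2 hdet)
  ext i
  simpa [Matrix.mulVec, dotProduct, mul_comm] using h i

/-- A polynomial function on `ZMod N` with `n` coefficients determines them when every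
prime factor of `N` is at least `n`. -/
lemma ZMod.eq_zero_of_forall_sum_mul_pow_eq_zero {N n : ℕ}
    (hN : ∀ k, 0 < k → k < n → k.Coprime N) (d : Fin n → ZMod N)
    (h : ∀ c : ZMod N, ∑ j : Fin n, d j * c ^ (j : ℕ) = 0) : d = 0 := by
  refine eq_zero_of_sum_mul_pow_eq_zero (fun i => ((i : ℕ) : ZMod N)) d (fun i j hij => ?_)
    fun i => h _
  have hij' : (i : ℕ) < j := hij
  rw [← Nat.cast_sub hij'.le, ZMod.isUnit_iff_coprime]
  exact hN _ (by omega) (by omega)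

theorem stmt0 (p q : ℕ) (hp : p.Prime) (hq : q.Prime) (hpq : p ≠ q)
    (hp32 : 32 < p) (hq32 : 32 < q)
    (A : Matrix (Fin 32) (Fin 33) (ZMod (p * q)))
    (α β : ZMod (p * q)) (t' r : Fin 32 → ZMod (p * q)) (π : Equiv.Perm (Fin 32)) :
    (∀ (c : ZMod (p * q)) (i : Fin 32),
        (∑ j : Fin 33, A i j * (α * c + β) ^ (j : ℕ)) - c ^ 32 * t' i
          = r (π i) * c ^ ((π i : ℕ))) ↔
    (∀ (i : Fin 32) (j : Fin 33),
        (A * binomMat α β) i j =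
          if j = Fin.castSucc (π i) then r (π i)
          else if j = Fin.last 32 then t' i
          else 0) := by
  set B := A * binomMat α β with hB
  have hsum (c : ZMod (p * q)) (i : Fin 32) :
      ∑ j : Fin 33, (if j = Fin.castSucc (π i) then r (π i)
        else if j = Fin.last 32 then t' i else 0) * c ^ (j : ℕ)
        = r (π i) * c ^ (π i : ℕ) + c ^ 32 * t' i := by
    rw [Fin.sum_univ_castSucc]
    have hlast : Fin.last 32 ≠ Fin.castSucc (π i) := (Fin.castSucc_lt_last _).ne'
    have hne (x : Fin 32) : Fin.castSucc x ≠ Fin.last 32 := (Fin.castSucc_lt_last _).ne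
    simp only [hlast, hne, if_false, Fin.castSucc_inj, ite_mul, zero_mul, Finset.sum_ite_eq',
      Finset.mem_univ, if_true, Fin.val_castSucc, Fin.val_last, mul_comm (t' i)]
  simp only [sum_mul_affine_pow_eq_sum_mul_binomMat, ← hB]
  constructor
  · intro h i j
    have hcop (k : ℕ) (hk : 0 < k) (hk' : k < 33) : k.Coprime (p * q) :=
      Nat.Coprime.mul_right (Nat.coprime_of_lt_prime hk.ne' (by omega) hp).symm
        (Nat.coprime_of_lt_prime hk.ne' (by omega) hq).symm
    have hzero := ZMod.eq_zero_of_forall_sum_mul_pow_eq_zero hcop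
      (fun j => B i j - if j = Fin.castSucc (π i) then r (π i)
        else if j = Fin.last 32 then t' i else 0) fun c => by
          simp only [sub_mul, Finset.sum_sub_distrib, hsum]
          linear_combination h c i
    exact sub_eq_zero.1 (congrFun hzero j)
  · intro h c i
    simp only [h, hsum]
    ring
end

section
/- Let N be a positive natural number, let c ∈ ZMod N, let π be a permutation of Fin 32, let k be a natural number, and let d : Fin (k+1) → Fin 32. Define the lookup table v : Fin 32 → ZMod N by v(j) = c^{π(j)} (exponent taken as a natural number). Define the sequence m_k, …, m_0 in ZMod N by m_k = v(π⁻¹(d(k))) and m_i = (m_{i+1})^{32} · v(π⁻¹(d(i))) for i = k−1 down to 0. Then m_0 = c^{Σ_{i=0}^{k} d(i)·32^i}. -/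
/-- Left-to-right windowed exponentiation in base `b`: Horner's rule in the exponent. -/
theorem windowed_pow_eq {M : Type*} [Monoid M] (b : ℕ) (c : M) (k : ℕ)
    (e : Fin (k + 1) → ℕ) (m : Fin (k + 1) → M)
    (hlast : m (Fin.last k) = c ^ e (Fin.last k))
    (hstep : ∀ i : Fin k, m i.castSucc = m i.succ ^ b * c ^ e i.castSucc) :
    m 0 = c ^ ∑ i, e i * b ^ (i : ℕ) := by
  induction k with
  | zero => simpa using hlast
  | succ k ih =>
    have htail : m (Fin.succ 0) = c ^ ∑ i : Fin (k + 1), e i.succ * b ^ (i : ℕ) :=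
      ih (fun i => e i.succ) (fun i => m i.succ) hlast (fun i => hstep i.succ)
    have hhead : m 0 = m (Fin.succ 0) ^ b * c ^ e 0 := hstep 0
    rw [hhead, htail, ← pow_mul, ← pow_add, Finset.sum_mul, Fin.sum_univ_succ (n := k + 1), add_comm]
    simp [pow_succ, mul_assoc]

theorem stmt5 (N : ℕ) (hN : 0 < N) (c : ZMod N) (π : Equiv.Perm (Fin 32))
    (k : ℕ) (d : Fin (k + 1) → Fin 32)
    (v : Fin 32 → ZMod N) (hv : ∀ j, v j = c ^ ((π j : ℕ)))
    (m : Fin (k + 1) → ZMod N)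
    (hlast : m (Fin.last k) = v (π⁻¹ (d (Fin.last k))))
    (hstep : ∀ i : Fin k,
        m (Fin.castSucc i) = (m i.succ) ^ 32 * v (π⁻¹ (d (Fin.castSucc i)))) :
    m 0 = c ^ (∑ i : Fin (k + 1), (d i : ℕ) * 32 ^ (i : ℕ)) := by
  have hlookup (j : Fin 32) : v (π⁻¹ j) = c ^ (j : ℕ) := by
    simp [hv]
  simp only [hlookup] at hlast hstep
  exact windowed_pow_eq 32 c k (fun i => (d i : ℕ)) m hlast hstep
end

section
/- Let N be a positive natural number, let c ∈ ZMod N, let π be a permutation of Fin 32, let r : Fin 32 → ZMod N, let k be a natural number, and let d : Fin (k+1) → Fin 32. Define the lookup table v : Fin 32 → ZMod N by v(j) = r(π(j))·c^{π(j)} (exponent taken as a natural number). Define the sequence m_k, …, m_0 in ZMod N by m_k = v(π⁻¹(d(k))) and m_i = (m_{i+1})^{32} · v(π⁻¹(d(i))) for i = k−1 down to 0. Then m_0 = c^{Σ_{i=0}^{k} d(i)·32^i} · Π_{i=0}^{k} (r(d(i)))^{32^i}. -/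
/-- Horner's scheme in multiplicative form: iterating `m i = m (i + 1) ^ b * a i` downwards from
`m k = a k` computes `∏ i, a i ^ b ^ i`. -/
theorem horner_prod_pow {M : Type*} [CommMonoid M] (b : ℕ) {k : ℕ} (a m : Fin (k + 1) → M)
    (hlast : m (Fin.last k) = a (Fin.last k))
    (hstep : ∀ i : Fin k, m i.castSucc = m i.succ ^ b * a i.castSucc) :
    m 0 = ∏ i, a i ^ b ^ (i : ℕ) := by
  induction k with
  | zero => simpa using hlast
  | succ k ih =>
    have htail : m (Fin.succ 0) = ∏ i : Fin (k + 1), a i.succ ^ b ^ (i : ℕ) :=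
      ih (fun i => a i.succ) (fun i => m i.succ) hlast fun i => hstep i.succ
    have hzero : m 0 = m (Fin.succ 0) ^ b * a 0 := hstep 0
    rw [Fin.prod_univ_succ, hzero, htail, mul_comm, ← Finset.prod_pow]
    simp [pow_succ, pow_mul]

theorem stmt6 (N : ℕ) (hN : 0 < N) (c : ZMod N) (π : Equiv.Perm (Fin 32))
    (r : Fin 32 → ZMod N)
    (k : ℕ) (d : Fin (k + 1) → Fin 32)
    (v : Fin 32 → ZMod N) (hv : ∀ j, v j = r (π j) * c ^ ((π j : ℕ)))
    (m : Fin (k + 1) → ZMod N)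
    (hlast : m (Fin.last k) = v (π⁻¹ (d (Fin.last k))))
    (hstep : ∀ i : Fin k,
        m (Fin.castSucc i) = (m i.succ) ^ 32 * v (π⁻¹ (d (Fin.castSucc i)))) :
    m 0 = c ^ (∑ i : Fin (k + 1), (d i : ℕ) * 32 ^ (i : ℕ)) *
          ∏ i : Fin (k + 1), (r (d i)) ^ (32 ^ (i : ℕ)) := by
  have hdigit : ∀ i, v (π⁻¹ (d i)) = r (d i) * c ^ (d i : ℕ) := fun i => by simp [hv]
  rw [horner_prod_pow 32 (fun i => v (π⁻¹ (d i))) m hlast hstep]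
  simp only [hdigit, mul_pow, Finset.prod_mul_distrib, ← pow_mul, Finset.prod_pow_eq_pow_sum]
  exact mul_comm _ _
end

section
/- Let p and q be distinct primes and N = p·q, and let c be an integer with gcd(c, N) = 1. Let d, d_{p,1}, d_{p,2}, d_{q,1}, d_{q,2} be natural numbers with d_{p,1} + d_{p,2} ≡ d (mod p−1) and d_{q,1} + d_{q,2} ≡ d (mod q−1). Let p₁, p₂, q₁, q₂ be integers with p₁ > 0, q₁ > 0, p dividing p₁ − p₂, and q dividing q₁ − q₂. Let γ₁, γ₂, γ₃ be integers with γ₁·(γ₂ + γ₃) ≡ 1 (mod p) and γ₁·(γ₂ + γ₃) ≡ 0 (mod q). Define m_p = ⌊(c^{d_{p,1}}·c^{d_{p,2}}) / p₁⌋·p₂ + ((c^{d_{p,1}}·c^{d_{p,2}}) mod p₁) and m_q = ⌊(c^{d_{q,1}}·c^{d_{q,2}}) / q₁⌋·q₂ + ((c^{d_{q,1}}·c^{d_{q,2}}) mod q₁), with integer quotient and nonnegative remainder. Then (m_p − m_q)·γ₁·(γ₂ + γ₃) + m_q ≡ c^d (mod N). -/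
/-- Replacing the modulus `m` by `k` in the Euclidean decomposition of `x` does not change
the residue of `x` modulo a divisor of `m - k`. -/
theorem Int.ediv_mul_add_emod_modEq {n m k : ℤ} (h : n ∣ m - k) (x : ℤ) :
    Int.ediv x m * k + Int.emod x m ≡ x [ZMOD n] := by
  have hx : Int.ediv x m * m + Int.emod x m = x := Int.ediv_mul_add_emod x m
  calc Int.ediv x m * k + Int.emod x m
      ≡ Int.ediv x m * m + Int.emod x m [ZMOD n] :=
        ((Int.modEq_iff_dvd.mpr h).mul_left _).add_right _
    _ = x := hx

/-- Powers of an integer coprime to a prime `p` depend only on the exponent modulo `p - 1`. -/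
theorem Int.pow_modEq_pow_of_modEq_sub_one {p : ℕ} (hp : p.Prime) {c : ℤ}
    (hc : IsCoprime c (p : ℤ)) {a b : ℕ} (h : a ≡ b [MOD p - 1]) :
    c ^ a ≡ c ^ b [ZMOD (p : ℤ)] := by
  wlog hab : a ≤ b generalizing a b
  · exact (this h.symm (le_of_not_ge hab)).symm
  obtain ⟨k, hk⟩ := (Nat.modEq_iff_dvd' hab).mp h
  have hb : b = a + (p - 1) * k := by omega
  have hone : (c ^ (p - 1)) ^ k ≡ 1 [ZMOD (p : ℤ)] := by
    simpa using (Int.ModEq.pow_card_sub_one_eq_one hp hc).pow k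
  rw [hb, pow_add, pow_mul]
  simpa using (hone.mul_left (c ^ a)).symm

theorem stmt12 (p q : ℕ) (hp : p.Prime) (hq : q.Prime) (hpq : p ≠ q)
    (c : ℤ) (hc : Int.gcd c ((p : ℤ) * (q : ℤ)) = 1)
    (d dp1 dp2 dq1 dq2 : ℕ)
    (hdp : dp1 + dp2 ≡ d [MOD p - 1]) (hdq : dq1 + dq2 ≡ d [MOD q - 1])
    (p₁ p₂ q₁ q₂ : ℤ) (hp₁ : 0 < p₁) (hq₁ : 0 < q₁)
    (hpd : (p : ℤ) ∣ p₁ - p₂) (hqd : (q : ℤ) ∣ q₁ - q₂)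
    (γ₁ γ₂ γ₃ : ℤ)
    (hγp : γ₁ * (γ₂ + γ₃) ≡ 1 [ZMOD (p : ℤ)])
    (hγq : γ₁ * (γ₂ + γ₃) ≡ 0 [ZMOD (q : ℤ)]) :
    ((Int.ediv (c ^ dp1 * c ^ dp2) p₁ * p₂ + Int.emod (c ^ dp1 * c ^ dp2) p₁)
        - (Int.ediv (c ^ dq1 * c ^ dq2) q₁ * q₂ + Int.emod (c ^ dq1 * c ^ dq2) q₁))
        * (γ₁ * (γ₂ + γ₃))
      + (Int.ediv (c ^ dq1 * c ^ dq2) q₁ * q₂ + Int.emod (c ^ dq1 * c ^ dq2) q₁)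
      ≡ c ^ d [ZMOD ((p : ℤ) * (q : ℤ))] := by
  have hcop : IsCoprime c ((p : ℤ) * (q : ℤ)) := Int.isCoprime_iff_gcd_eq_one.mpr hc
  have hmp := (Int.ediv_mul_add_emod_modEq hpd (c ^ dp1 * c ^ dp2)).trans
    (pow_add c dp1 dp2 ▸ Int.pow_modEq_pow_of_modEq_sub_one hp hcop.of_mul_right_left hdp)
  have hmq := (Int.ediv_mul_add_emod_modEq hqd (c ^ dq1 * c ^ dq2)).trans
    (pow_add c dq1 dq2 ▸ Int.pow_modEq_pow_of_modEq_sub_one hq hcop.of_mul_right_right hdq)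
  generalize Int.ediv (c ^ dp1 * c ^ dp2) p₁ * p₂ + Int.emod (c ^ dp1 * c ^ dp2) p₁ = mp at *
  generalize Int.ediv (c ^ dq1 * c ^ dq2) q₁ * q₂ + Int.emod (c ^ dq1 * c ^ dq2) q₁ = mq at *
  refine (Int.modEq_and_modEq_iff_modEq_mul
    (by simpa using (Nat.coprime_primes hp hq).mpr hpq)).mp ⟨?_, ?_⟩
  · have h := (hγp.mul_left (mp - mq)).add_right mq
    rw [mul_one, sub_add_cancel] at h
    exact h.trans hmp
  · have h := (hγq.mul_left (mp - mq)).add_right mq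
    rw [mul_zero, zero_add] at h
    exact h.trans hmq
end
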